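/- Let d ≥ 2, L > 0 and δ > 0. Then there exists a constant C = C(d, L, δ) > 0 such that for every L-Lipschitz function g : 𝕋^{d−1} → ℝ with osc_{𝕋^{d−1}} g ≥ δ and every ε ∈ (0,1), one has ∫_{𝕋^{d−1}} [ √(1 + |∇g(x′)|²) − √(1 + (1−ε)² |∇g(x′)|²) ] dx′ ≥ C ε, where ∇g denotes the almost-everywhere defined gradient of g. (In other words, the Euclidean perimeter of periodic Lipschitz subgraphs satisfies assumption (H).) -/

import Mathlib

open MeasureTheory Filter Set
open scoped ENNReal

noncomputable section

/-- Euclidean space `ℝ^m`. -/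
abbrev Rm (m : ℕ) : Type := EuclideanSpace ℝ (Fin m)

/-- The fundamental cube `[0,1)^m`. -/
def cube (m : ℕ) : Set (Rm m) := {x | ∀ i, x i ∈ Set.Ico (0:ℝ) 1}

/-- The standard basis of `ℝ^m`, whose integer span is the lattice `ℤ^m`. -/
abbrev stdBasis (m : ℕ) : Module.Basis (Fin m) ℝ (Rm m) :=
  (EuclideanSpace.basisFun (Fin m) ℝ).toBasis

/-- The lattice `ℤ^m` in `ℝ^m`. -/
abbrev stdLattice (m : ℕ) : Submodule ℤ (Rm m) := Submodule.span ℤ (Set.range (stdBasis m))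

theorem cube_eq_fundamentalDomain (m : ℕ) :
    cube m = ZSpan.fundamentalDomain (stdBasis m) := by
  ext x
  simp [cube, ZSpan.mem_fundamentalDomain]

theorem volume_cube (m : ℕ) : volume (cube m) = 1 := by
  have h : cube m = (WithLp.ofLp : Rm m → Fin m → ℝ) ⁻¹'
      (Set.pi Set.univ fun _ => Set.Ico (0 : ℝ) 1) := by
    ext x
    simp [cube]
  rw [h, (PiLp.volume_preserving_ofLp (Fin m)).measure_preimage
    (MeasurableSet.univ_pi fun _ => measurableSet_Ico).nullMeasurableSet, Real.volume_pi_Ico]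
  simp

theorem exists_toLp_eq_of_mem_stdLattice {m : ℕ} {v : Rm m} (hv : v ∈ stdLattice m) :
    ∃ z : Fin m → ℤ, v = WithLp.toLp 2 fun i => (z i : ℝ) := by
  choose z hz using ((stdBasis m).mem_span_iff_repr_mem ℤ v).mp hv
  refine ⟨z, ?_⟩
  ext i
  simpa using (hz i).symm

theorem setIntegral_cube_add_left {m : ℕ} {f : Rm m → ℝ}
    (hf : ∀ v ∈ stdLattice m, ∀ x, f (x + v) = f x) (p : Rm m) :
    ∫ x in cube m, f (p + x) = ∫ x in cube m, f x := by
  have hdom : IsAddFundamentalDomain (stdLattice m).toAddSubgroup (cube m) volume := by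
    rw [cube_eq_fundamentalDomain]
    exact ZSpan.isAddFundamentalDomain' _ _
  have himg := (measurePreserving_add_left volume p).setIntegral_image_emb
    (measurableEmbedding_addLeft p) f (cube m)
  rw [← himg]
  have hdom' : IsAddFundamentalDomain (stdLattice m).toAddSubgroup ((fun x => p + x) '' cube m) volume :=
    hdom.vadd_of_comm p
  have : Countable (stdLattice m).toAddSubgroup := inferInstanceAs (Countable (stdLattice m))
  refine hdom'.setIntegral_eq hdom fun v x => ?_
  rw [AddSubgroup.vadd_def, vadd_eq_add, add_comm]
  exact hf v v.2 x

theorem exists_norm_le_and_eq_of_periodic {m : ℕ} {g : Rm m → ℝ}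
    (hg : ∀ v ∈ stdLattice m, ∀ x, g (x + v) = g x) (x : Rm m) :
    ∃ y : Rm m, ‖y‖ ≤ m ∧ g y = g x := by
  refine ⟨ZSpan.fract (stdBasis m) x, ?_, ?_⟩
  · refine (ZSpan.norm_fract_le _ x).trans ?_
    simp
  · rw [ZSpan.fract_apply, ← hg _ (ZSpan.floor (stdBasis m) x).2, sub_add_cancel]

theorem ball_subset_cube (m : ℕ) {r : ℝ} (hr : r ≤ 1 / 2) :
    Metric.ball (WithLp.toLp 2 fun _ => 1 / 2 : Rm m) r ⊆ cube m := by
  intro x hx i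
  have h := (PiLp.norm_apply_le (x - (WithLp.toLp 2 fun _ => 1 / 2 : Rm m)) i).trans_lt
    (mem_ball_iff_norm.mp hx)
  rw [PiLp.sub_apply, Real.norm_eq_abs, abs_lt] at h
  constructor <;> linarith [h.1, h.2]

theorem integrableOn_norm_fderiv {m : ℕ} {K : NNReal} {g : Rm m → ℝ} (hg : LipschitzWith K g)
    (p : Rm m) {s : Set (Rm m)} (hs : volume s ≠ ∞) :
    IntegrableOn (fun x => ‖fderiv ℝ g (p + x)‖) s := by
  refine Measure.integrableOn_of_bounded (M := K) hs ?_ ?_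
  · exact ((measurable_fderiv ℝ g).comp (measurable_const_add p)).norm.aestronglyMeasurable
  · filter_upwards with x
    rw [norm_norm]
    exact norm_fderiv_le_of_lipschitz ℝ hg

/-- Averages of a Lipschitz function over translates of a set of finite measure are
differentiable in the translation parameter, and differentiation passes under the integral. -/
theorem hasDerivAt_setIntegral_translate {m : ℕ} {K : NNReal} {g : Rm m → ℝ}
    (hg : LipschitzWith K g) (p w : Rm m) {s : Set (Rm m)} (hs : Bornology.IsBounded s) (t : ℝ) :
    HasDerivAt (fun t : ℝ => ∫ x in s, g (p + t • w + x))
      (∫ x in s, fderiv ℝ g (p + t • w + x) w) t := by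
  have hfin : volume s ≠ ∞ := hs.measure_lt_top.ne
  have hdiff : ∀ᵐ x ∂volume.restrict s, DifferentiableAt ℝ g (p + t • w + x) :=
    ae_restrict_of_ae ((measurePreserving_add_left volume (p + t • w)).quasiMeasurePreserving.ae
      hg.ae_differentiableAt)
  refine (hasDerivAt_integral_of_dominated_loc_of_lip
    (bound := fun _ => (K : ℝ) * ‖w‖) (s := Set.univ) Filter.univ_mem ?_ ?_ ?_ ?_ ?_ ?_).2
  · exact Filter.Eventually.of_forall fun t =>
      (hg.continuous.comp (continuous_const_add _)).aestronglyMeasurable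
  · exact ((hg.continuous.comp (continuous_const_add _)).continuousOn.integrableOn_compact
      hs.isCompact_closure).mono_set subset_closure
  · exact ((measurable_fderiv_apply_const ℝ g w).comp
      (measurable_const_add _)).aestronglyMeasurable
  · filter_upwards with x
    refine LipschitzWith.lipschitzOnWith (LipschitzWith.of_dist_le_mul fun a b => ?_)
    refine (hg.dist_le_mul _ _).trans_eq ?_
    rw [dist_add_right, dist_add_left, dist_eq_norm, ← sub_smul, norm_smul, dist_eq_norm,
      Real.coe_nnabs, abs_of_nonneg (by positivity)]
    ring
  · exact integrableOn_const hfin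
  · filter_upwards [hdiff] with x hx
    have hline : HasDerivAt (fun t : ℝ => p + t • w + x) w t := by
      simpa using (((hasDerivAt_id t).smul_const w).const_add p).add_const x
    exact hx.hasFDerivAt.comp_hasDerivAt t hline

theorem fderiv_periodic {m : ℕ} {g : Rm m → ℝ}
    (hg : ∀ v ∈ stdLattice m, ∀ x, g (x + v) = g x) :
    ∀ v ∈ stdLattice m, ∀ x, fderiv ℝ g (x + v) = fderiv ℝ g x := by
  intro v hv x
  rw [← fderiv_comp_add_right]
  congr 1
  exact funext (hg v hv)

/-- Translating a periodic Lipschitz function by `w` changes its integral over a subset of the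
unit cube by at most `‖w‖` times the integral of the norm of its gradient. -/
theorem setIntegral_translate_sub_le {m : ℕ} {K : NNReal} {g : Rm m → ℝ}
    (hg : LipschitzWith K g) (hper : ∀ v ∈ stdLattice m, ∀ x, g (x + v) = g x)
    (p w : Rm m) {s : Set (Rm m)} (hs : s ⊆ cube m) :
    (∫ x in s, g (p + w + x)) - ∫ x in s, g (p + x) ≤
      ‖w‖ * ∫ x in cube m, ‖fderiv ℝ g x‖ := by
  have hbdd : Bornology.IsBounded s := by
    rw [cube_eq_fundamentalDomain] at hs
    exact (ZSpan.fundamentalDomain_isBounded (stdBasis m)).subset hs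
  have hcube : volume (cube m) ≠ ∞ := by simp [volume_cube]
  have hbound : ∀ t : ℝ, ‖∫ x in s, fderiv ℝ g (p + t • w + x) w‖ ≤
      ‖w‖ * ∫ x in cube m, ‖fderiv ℝ g x‖ := by
    intro t
    calc ‖∫ x in s, fderiv ℝ g (p + t • w + x) w‖
        ≤ ∫ x in s, ‖w‖ * ‖fderiv ℝ g (p + t • w + x)‖ := by
          refine norm_integral_le_of_norm_le
            ((integrableOn_norm_fderiv hg _ hbdd.measure_lt_top.ne).const_mul _) ?_
          filter_upwards with x
          rw [mul_comm]
          exact ContinuousLinearMap.le_opNorm _ _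
      _ = ‖w‖ * ∫ x in s, ‖fderiv ℝ g (p + t • w + x)‖ := integral_const_mul _ _
      _ ≤ ‖w‖ * ∫ x in cube m, ‖fderiv ℝ g (p + t • w + x)‖ := by
          gcongr
          · exact Filter.Eventually.of_forall fun x => norm_nonneg _
          · exact integrableOn_norm_fderiv hg _ hcube
      _ = ‖w‖ * ∫ x in cube m, ‖fderiv ℝ g x‖ := by
          rw [setIntegral_cube_add_left (f := fun x => ‖fderiv ℝ g x‖)]
          exact fun v hv x => congrArg _ (fderiv_periodic hper v hv x)
  have h := norm_image_sub_le_of_norm_deriv_le_segment_01'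
    (fun t _ => (hasDerivAt_setIntegral_translate hg p w hbdd t).hasDerivWithinAt)
    (fun t _ => hbound t)
  simpa using (le_abs_self _).trans h

/-- Quantitative lower bound for the total variation of a periodic Lipschitz function in terms
of the difference of two of its values. -/
theorem volume_ball_mul_le_integral_norm_fderiv {m : ℕ} {K : NNReal} {g : Rm m → ℝ}
    (hg : LipschitzWith K g) (hper : ∀ v ∈ stdLattice m, ∀ x, g (x + v) = g x)
    {r η : ℝ} (hr : r ≤ 1 / 2) (hη : 2 * K * r ≤ η)
    {x y : Rm m} (hxy : 2 * η ≤ g x - g y) :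
    volume.real (Metric.ball (WithLp.toLp 2 fun _ => 1 / 2 : Rm m) r) * η ≤
      2 * m * ∫ x in cube m, ‖fderiv ℝ g x‖ := by
  obtain ⟨x', hx', hgx⟩ := exists_norm_le_and_eq_of_periodic hper x
  obtain ⟨y', hy', hgy⟩ := exists_norm_le_and_eq_of_periodic hper y
  set c : Rm m := WithLp.toLp 2 fun _ => 1 / 2
  have hint : ∀ p : Rm m, IntegrableOn (fun v => g (p + v)) (Metric.ball c r) := fun p =>
    ((hg.continuous.comp (continuous_const_add p)).continuousOn.integrableOn_compact
      (isCompact_closedBall c r)).mono_set Metric.ball_subset_closedBall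
  have hle := setIntegral_translate_sub_le hg hper (y' - c) (x' - y') (ball_subset_cube m hr)
  rw [← integral_sub (hint _) (hint _)] at hle
  have hlow : ∀ v ∈ Metric.ball c r, η ≤ g (y' - c + (x' - y') + v) - g (y' - c + v) := by
    intro v hv
    have hclose : ∀ z : Rm m, |g (z - c + v) - g z| ≤ K * r := by
      intro z
      refine (hg.dist_le_mul (z - c + v) z).trans ?_
      have hd : dist (z - c + v) z = dist v c := by
        rw [dist_eq_norm, dist_eq_norm]
        congr 1
        abel
      rw [hd]
      gcongr
      exact (Metric.mem_ball.mp hv).le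
    have hx := abs_le.mp (hclose x')
    have hy := abs_le.mp (hclose y')
    rw [show y' - c + (x' - y') + v = x' - c + v by abel]
    linarith [hx.1, hy.2]
  have hconst : volume.real (Metric.ball c r) * η ≤
      ∫ v in Metric.ball c r, (g (y' - c + (x' - y') + v) - g (y' - c + v)) := by
    rw [mul_comm]
    exact setIntegral_ge_of_const_le_real measurableSet_ball measure_ball_lt_top.ne hlow
      ((hint _).sub (hint _))
  have hnonneg : 0 ≤ ∫ x in cube m, ‖fderiv ℝ g x‖ := integral_nonneg fun _ => norm_nonneg _
  refine hconst.trans (hle.trans ?_)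
  gcongr
  linarith [norm_sub_le x' y']

theorem sqrt_sub_sqrt_ge {a L ε : ℝ} (ha : 0 ≤ a) (haL : a ≤ L) (hε : 0 < ε) (hε1 : ε < 1) :
    ε * a ^ 2 / (2 * √(1 + L ^ 2)) ≤ √(1 + a ^ 2) - √(1 + (1 - ε) ^ 2 * a ^ 2) := by
  have hS : 0 < √(1 + L ^ 2) := by positivity
  have h1 : √(1 + a ^ 2) ≤ √(1 + L ^ 2) := by gcongr
  have h2 : √(1 + (1 - ε) ^ 2 * a ^ 2) ≤ √(1 + a ^ 2) := by
    apply Real.sqrt_le_sqrt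
    have : (1 - ε) ^ 2 ≤ 1 := pow_le_one₀ (by linarith) (by linarith)
    linarith [mul_le_of_le_one_left (sq_nonneg a) this]
  have e1 : √(1 + a ^ 2) ^ 2 = 1 + a ^ 2 := Real.sq_sqrt (by positivity)
  have e2 : √(1 + (1 - ε) ^ 2 * a ^ 2) ^ 2 = 1 + (1 - ε) ^ 2 * a ^ 2 :=
    Real.sq_sqrt (by positivity)
  rw [div_le_iff₀ (by positivity)]
  calc ε * a ^ 2 ≤ √(1 + a ^ 2) ^ 2 - √(1 + (1 - ε) ^ 2 * a ^ 2) ^ 2 := by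
        rw [e1, e2]
        nlinarith [mul_nonneg (mul_nonneg hε.le (sub_nonneg.mpr hε1.le)) (sq_nonneg a)]
    _ = (√(1 + a ^ 2) - √(1 + (1 - ε) ^ 2 * a ^ 2)) *
          (√(1 + a ^ 2) + √(1 + (1 - ε) ^ 2 * a ^ 2)) := by ring
    _ ≤ _ := mul_le_mul_of_nonneg_left (by linarith) (by linarith)

/-- The Euclidean perimeter of periodic Lipschitz subgraphs satisfies assumption (H):
shrinking the graph vertically by a factor `1-ε` decreases the area integrand by at
least `C ε`, provided the oscillation is at least `δ`. -/
theorem euclidean_perimeter_assumptionH (d : ℕ) (hd : 2 ≤ d) (L δ : ℝ)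
    (hL : 0 < L) (hδ : 0 < δ) :
    ∃ C : ℝ, 0 < C ∧
      ∀ g : Rm (d-1) → ℝ, LipschitzWith (Real.toNNReal L) g →
        (∀ (x : Rm (d-1)) (z : Fin (d-1) → ℤ),
          g (x + (show Rm (d-1) from WithLp.toLp 2 fun i => (z i : ℝ))) = g x) →
        δ ≤ (⨆ x, g x) - (⨅ x, g x) →
        ∀ ε : ℝ, 0 < ε → ε < 1 →
          C * ε ≤ ∫ x in cube (d-1),
            (Real.sqrt (1 + ‖fderiv ℝ g x‖ ^ 2)
              - Real.sqrt (1 + (1 - ε) ^ 2 * ‖fderiv ℝ g x‖ ^ 2)) := by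
  set m := d - 1
  have hm : (0 : ℝ) < m := by
    have : 0 < m := by omega
    exact_mod_cast this
  set r : ℝ := min (1 / 2) (δ / (8 * L))
  have hr : 0 < r := by positivity
  set V := volume.real (Metric.ball (WithLp.toLp 2 fun _ => 1 / 2 : Rm m) r)
  have hV : 0 < V := ENNReal.toReal_pos (Metric.measure_ball_pos _ _ hr).ne' measure_ball_lt_top.ne
  set κ : ℝ := V * (δ / 4) / (2 * m)
  have hκ : 0 < κ := by positivity
  refine ⟨κ ^ 2 / (2 * √(1 + L ^ 2)), by positivity, ?_⟩
  intro g hg hper hosc ε hε hε1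
  have hLcoe : (L.toNNReal : ℝ) = L := Real.coe_toNNReal L hL.le
  have hper' : ∀ v ∈ stdLattice m, ∀ x, g (x + v) = g x := by
    intro v hv x
    obtain ⟨z, rfl⟩ := exists_toLp_eq_of_mem_stdLattice hv
    exact hper x z
  obtain ⟨x, hx⟩ := exists_lt_of_lt_ciSup (show (⨆ x, g x) - δ / 4 < ⨆ x, g x by linarith)
  obtain ⟨y, hy⟩ := exists_lt_of_ciInf_lt (show (⨅ x, g x) < (⨅ x, g x) + δ / 4 by linarith)
  have hrL : 2 * (L.toNNReal : ℝ) * r ≤ δ / 4 := by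
    have : r ≤ δ / (8 * L) := min_le_right _ _
    rw [le_div_iff₀ (by positivity)] at this
    rw [hLcoe]
    linarith
  have hTV : κ ≤ ∫ x in cube m, ‖fderiv ℝ g x‖ := by
    rw [div_le_iff₀ (by positivity), mul_comm _ (2 * (m : ℝ))]
    exact volume_ball_mul_le_integral_norm_fderiv hg hper' (min_le_left _ _) hrL
      (show 2 * (δ / 4) ≤ g x - g y by linarith)
  have hcube : volume (cube m) ≠ ∞ := by simp [volume_cube]
  have hnorm : ∀ x, ‖fderiv ℝ g x‖ ≤ L := fun x =>
    hLcoe ▸ norm_fderiv_le_of_lipschitz ℝ hg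
  have hint : IntegrableOn (fun x => ‖fderiv ℝ g x‖) (cube m) := by
    simpa using integrableOn_norm_fderiv hg 0 hcube
  have hmeas : Measurable fun x => ‖fderiv ℝ g x‖ := (measurable_fderiv ℝ g).norm
  have hsqrt : ∀ c : ℝ, IntegrableOn (fun x => √(1 + c ^ 2 * ‖fderiv ℝ g x‖ ^ 2)) (cube m) := by
    intro c
    refine Measure.integrableOn_of_bounded (M := √(1 + c ^ 2 * L ^ 2)) hcube
      (by fun_prop) ?_
    filter_upwards with x
    rw [Real.norm_of_nonneg (Real.sqrt_nonneg _)]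
    gcongr
    exact hnorm x
  set A := ∫ x in cube m, ‖fderiv ℝ g x‖
  calc κ ^ 2 / (2 * √(1 + L ^ 2)) * ε
      ≤ ε / (2 * √(1 + L ^ 2)) * (2 * κ * A - κ ^ 2) := by
        rw [div_mul_eq_mul_div, div_mul_eq_mul_div]
        gcongr ?_ / _
        nlinarith [mul_nonneg hε.le (mul_nonneg hκ.le (sub_nonneg.mpr hTV))]
    _ = ∫ x in cube m, ε / (2 * √(1 + L ^ 2)) * (2 * κ * ‖fderiv ℝ g x‖ - κ ^ 2) := by
        rw [integral_const_mul, integral_sub (hint.const_mul _) (integrableOn_const hcube),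
          integral_const_mul, setIntegral_const, measureReal_def, volume_cube]
        simp [A]
    _ ≤ _ := by
        refine integral_mono
          (((hint.const_mul _).sub (integrableOn_const hcube)).const_mul _) ?_ fun x => ?_
        · simpa [IntegrableOn, Pi.sub_def] using (hsqrt 1).sub (hsqrt (1 - ε))
        · refine le_trans ?_ (sqrt_sub_sqrt_ge (norm_nonneg _) (hnorm x) hε hε1)
          rw [mul_div_right_comm]
          gcongr
          linarith [sq_nonneg (‖fderiv ℝ g x‖ - κ)]
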